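/- arXiv:1802.05702 — 2 statements merged into one kernel-verified Lean document; each statement's English description precedes it below -/
import Mathlib

section
/- Let R be a commutative ring, f₁,…,fₙ ∈ R a regular sequence, and fix k with 1 ≤ k ≤ n. Let B = R[X_r : r ∈ {1,…,n}, r ≠ k] be the polynomial ring in n−1 variables, and regard B as an algebra over the polynomial ring Q = ℤ[S_r : r ≠ k] via S_r ↦ f_k·X_r − f_r. Then Torᵢ^Q(B, Q/(S_r : r ≠ k)) = 0 for every i > 0; that is, the sequence (f_k·X_r − f_r)_{r ≠ k} is Koszul-regular in B. (These are the defining relations of the k-th chart of the blow-up of Spec R in the regularly immersed subscheme V(f₁,…,fₙ).) -/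
open CategoryTheory CategoryTheory.Limits MvPolynomial

/-!
Write `B = R[X]`, `sᵣ = uXᵣ - aᵣ` with `u = f_k`, and compute `Tor^Q(-, Z)`, `Z = Q/(S)`, from a
projective resolution of `Z`, noting that `Tor_i` vanishes for `i > |σ|`, where `σ` indexes the
variables.  Two facts move vanishing around.

* If `r ∈ B` is a nonzerodivisor and `Tor_{i+1}(B/r, Z) = 0`, then `r` is injective on
  `Tor_i(B, Z)`; so this module vanishes as soon as each of its elements is killed by a power
  of `r`.
* Every element of `Tor_i(B, Z)`, `i > 0`, is killed by a power of each element of `(u, a)`.  After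
  inverting `u` the `sᵣ` become variables up to an affine automorphism of `R_u[X]`, hence a regular
  sequence killing `Z`, and `Tor_i(B_u, Z) = 0` by the first fact: so a power of `u` works.
  Since `sᵣ` kills `Z`, a power of `aᵣ = uXᵣ - sᵣ` works too.

Dividing `R` successively by the members of a regular sequence in `(u, a)`, each step raises the
degree `i` by one, until `i > |σ|`.
-/

universe u v w

section SnakeArgument

variable {B K₃ K₂ K₁ L₃ L₂ L₁ : Type*} [CommRing B]
  [AddCommGroup K₃] [AddCommGroup K₂] [AddCommGroup K₁]
  [AddCommGroup L₃] [AddCommGroup L₂] [AddCommGroup L₁]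
  [Module B K₃] [Module B K₂] [Module B K₁] [Module B L₃] [Module B L₂] [Module B L₁]

theorem mem_range_of_smul_mem_range {d₃ : K₃ →ₗ[B] K₂} {d₂ : K₂ →ₗ[B] K₁} {e₃ : L₃ →ₗ[B] L₂}
    {e₂ : L₂ →ₗ[B] L₁} {π₃ : K₃ →ₗ[B] L₃} {π₂ : K₂ →ₗ[B] L₂} {π₁ : K₁ →ₗ[B] L₁} {r : B}
    (hd : d₂ ∘ₗ d₃ = 0) (he : Function.Exact e₃ e₂) (hπ₃₂ : e₃ ∘ₗ π₃ = π₂ ∘ₗ d₃)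
    (hπ₂₁ : e₂ ∘ₗ π₂ = π₁ ∘ₗ d₂) (hπ₃ : Function.Surjective π₃)
    (hπ₂ : Function.Exact (LinearMap.lsmul B K₂ r) π₂)
    (hπ₁ : π₁ ∘ₗ LinearMap.lsmul B K₁ r = 0) (hr : IsSMulRegular K₁ r) {z : K₁}
    (hz : r • z ∈ LinearMap.range d₂) : z ∈ LinearMap.range d₂ := by
  obtain ⟨w, hw⟩ := hz
  obtain ⟨v', hv'⟩ : π₂ w ∈ LinearMap.range e₃ :=
    (he (π₂ w)).mp <| calc
      e₂ (π₂ w) = π₁ (d₂ w) := congr($hπ₂₁ w)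
      _ = π₁ (r • z) := by rw [hw]
      _ = 0 := congr($hπ₁ z)
  obtain ⟨v, rfl⟩ := hπ₃ v'
  obtain ⟨y, hy⟩ := (hπ₂ (w - d₃ v)).mp <| by
    rw [map_sub, ← hv', sub_eq_zero]
    exact congr($hπ₃₂ v)
  refine ⟨y, hr ?_⟩
  calc r • d₂ y = d₂ (w - d₃ v) := by rw [← map_smul]; exact congr(d₂ $hy)
    _ = d₂ w - d₂ (d₃ v) := map_sub ..
    _ = r • z := by rw [hw, show d₂ (d₃ v) = 0 from congr($hd v), sub_zero]

end SnakeArgument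

section TensorProductRegular

open TensorProduct

variable {Q B M M' N : Type*} [CommRing Q] [CommRing B] [Algebra Q B]
  [AddCommGroup M] [Module Q M] [Module B M] [IsScalarTower Q B M]
  [AddCommGroup M'] [Module Q M'] [Module B M'] [IsScalarTower Q B M']
  [AddCommGroup N] [Module Q N] {r : B}

variable (M N r) in
theorem lsmul_tensorProduct_eq_rTensor :
    LinearMap.lsmul B (M ⊗[Q] N) r = AlgebraTensorModule.rTensor Q N (LinearMap.lsmul B M r) :=
  AlgebraTensorModule.curry_injective rfl

variable (N) in
theorem exact_lsmul_rTensor {π : M →ₗ[B] M'} (hπ : Function.Surjective π)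
    (hrπ : Function.Exact (LinearMap.lsmul B M r) π) :
    Function.Exact (LinearMap.lsmul B (M ⊗[Q] N) r) (AlgebraTensorModule.rTensor Q N π) := by
  rw [lsmul_tensorProduct_eq_rTensor]
  exact rTensor_exact N (f := (LinearMap.lsmul B M r).restrictScalars Q)
    (g := π.restrictScalars Q) hrπ hπ

variable (N) in
theorem isSMulRegular_tensorProduct_of_flat [Module.Flat Q N] (hr : IsSMulRegular M r) :
    IsSMulRegular (M ⊗[Q] N) r := by
  change Function.Injective (LinearMap.lsmul B (M ⊗[Q] N) r)
  rw [lsmul_tensorProduct_eq_rTensor]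
  exact Module.Flat.rTensor_preserves_injective_linearMap
    ((LinearMap.lsmul B M r).restrictScalars Q) hr

end TensorProductRegular

section TensorResolution

open TensorProduct RingTheory.Sequence
open scoped Pointwise

variable {Q : Type u} [CommRing Q] {Z : ModuleCat.{u} Q} (P : ProjectiveResolution Z)

instance moduleProjective_complex_X (i : ℕ) : Module.Projective Q (P.complex.X i) :=
  (IsProjective.iff_projective _).mpr (P.projective i)

section

variable (B : Type v) [CommRing B] [Algebra Q B] (M : Type w) [AddCommGroup M] [Module Q M]
  [Module B M] [IsScalarTower Q B M] (i : ℕ)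

/-- The differential of the complex `M ⊗ P` computing `Tor^Q(M, Z)`, taken `B`-linear for a
`Q`-algebra `B` acting on `M`. -/
noncomputable def tensorDifferential : M ⊗[Q] P.complex.X (i + 1) →ₗ[B] M ⊗[Q] P.complex.X i :=
  AlgebraTensorModule.lTensor B M (P.complex.d (i + 1) i).hom

theorem tensorDifferential_apply (x : M ⊗[Q] P.complex.X (i + 1)) :
    tensorDifferential P B M i x = (P.complex.d (i + 1) i).hom.lTensor M x := rfl

theorem tensorDifferential_comp_tensorDifferential :
    tensorDifferential P B M i ∘ₗ tensorDifferential P B M (i + 1) = 0 := by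
  refine AlgebraTensorModule.curry_injective (LinearMap.ext₂ fun m p ↦ ?_)
  change m ⊗ₜ (P.complex.d (i + 2) (i + 1) ≫ P.complex.d (i + 1) i).hom p = 0
  rw [P.complex.d_comp_d, ModuleCat.hom_zero, LinearMap.zero_apply, tmul_zero]

end

theorem isZero_tor_succ_iff_exact (B : Type v) [CommRing B] [Algebra Q B] (M : Type u)
    [AddCommGroup M] [Module Q M] [Module B M] [IsScalarTower Q B M] (i : ℕ) :
    IsZero (((Tor (ModuleCat Q) (i + 1)).obj (ModuleCat.of Q M)).obj Z) ↔
      Function.Exact (tensorDifferential P B M (i + 1)) (tensorDifferential P B M i) := by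
  let F := (MonoidalCategory.tensoringLeft _).obj (ModuleCat.of Q M)
  refine (P.isoLeftDerivedObj F (i + 1)).isZero_iff.trans ?_
  refine (HomologicalComplex.exactAt_iff_isZero_homology _ (i + 1)).symm.trans ?_
  rw [HomologicalComplex.exactAt_iff' _ (i + 2) (i + 1) i (by simp) (by simp)]
  exact ShortComplex.ShortExact.moduleCat_exact_iff_function_exact _

variable {B : Type v} [CommRing B] [Algebra Q B] {M : Type w} [AddCommGroup M] [Module Q M]
  [Module B M] [IsScalarTower Q B M] {M' : Type w} [AddCommGroup M'] [Module Q M'] [Module B M']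
  [IsScalarTower Q B M'] {i : ℕ}

theorem tensorDifferential_comp_rTensor (π : M →ₗ[B] M') (i : ℕ) :
    tensorDifferential P B M' i ∘ₗ AlgebraTensorModule.rTensor Q (P.complex.X (i + 1)) π =
      AlgebraTensorModule.rTensor Q (P.complex.X i) π ∘ₗ tensorDifferential P B M i :=
  AlgebraTensorModule.curry_injective rfl

theorem exact_tensorDifferential_of_isSMulRegular {r : B} (hr : IsSMulRegular M r)
    {π : M →ₗ[B] M'} (hπ : Function.Surjective π)
    (hrπ : Function.Exact (LinearMap.lsmul B M r) π)
    (hM' : Function.Exact (tensorDifferential P B M' (i + 2)) (tensorDifferential P B M' (i + 1)))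
    (hrad : ∀ z, tensorDifferential P B M i z = 0 →
      r ∈ ((LinearMap.range (tensorDifferential P B M (i + 1))).colon {z}).radical) :
    Function.Exact (tensorDifferential P B M (i + 1)) (tensorDifferential P B M i) := by
  refine LinearMap.exact_of_comp_eq_zero_of_ker_le_range
    (tensorDifferential_comp_tensorDifferential P B M i) fun z hz ↦ ?_
  obtain ⟨n, hn⟩ := hrad z hz
  rw [Submodule.mem_colon_singleton] at hn
  induction n with
  | zero => rwa [pow_zero, one_smul] at hn
  | succ n ih =>
    rw [pow_succ', mul_smul] at hn
    have hπ₃ : Function.Surjective (AlgebraTensorModule.rTensor Q (P.complex.X (i + 3)) π) :=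
      LinearMap.rTensor_surjective _ (g := π.restrictScalars Q) hπ
    exact ih (mem_range_of_smul_mem_range
      (tensorDifferential_comp_tensorDifferential P B M (i + 1)) hM'
      (tensorDifferential_comp_rTensor P π (i + 2)) (tensorDifferential_comp_rTensor P π (i + 1))
      hπ₃ (exact_lsmul_rTensor _ hπ hrπ) (exact_lsmul_rTensor _ hπ hrπ).linearMap_comp_eq_zero
      (isSMulRegular_tensorProduct_of_flat _ hr) hn)

-- Multiplication by `s` on `P` lifts the zero map of `Z`, so it is null-homotopic.
theorem algebraMap_mem_colon_range_tensorDifferential {s : Q} (hs : ∀ y : Z, s • y = 0)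
    {z : M ⊗[Q] P.complex.X (i + 1)} (hz : tensorDifferential P B M i z = 0) :
    algebraMap Q B s ∈ (LinearMap.range (tensorDifferential P B M (i + 1))).colon {z} := by
  have hπ : (s • 𝟙 P.complex) ≫ P.π = 0 := by
    rw [Linear.smul_comp, Category.id_comp]
    ext : 1
    ext x
    exact hs _
  let H := ProjectiveResolution.liftHomotopyZero (P := P) (Q := P) (s • 𝟙 P.complex) hπ
  have hH := H.comm (i + 1)
  rw [dNext_eq H.hom (show (ComplexShape.down ℕ).Rel (i + 1) i from rfl),
    prevD_eq H.hom (show (ComplexShape.down ℕ).Rel (i + 2) (i + 1) from rfl)] at hH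
  have hHz := congr((ModuleCat.Hom.hom $hH).lTensor M z)
  simp only [HomologicalComplex.smul_f_apply, HomologicalComplex.id_f, ModuleCat.hom_smul,
    ModuleCat.hom_id, HomologicalComplex.zero_f, add_zero, ModuleCat.hom_add, ModuleCat.hom_comp,
    LinearMap.lTensor_add, LinearMap.lTensor_smul, LinearMap.lTensor_id, LinearMap.add_apply,
    LinearMap.smul_apply, LinearMap.id_apply, LinearMap.lTensor_comp_apply] at hHz
  rw [← tensorDifferential_apply P B, hz, map_zero, zero_add] at hHz
  rw [Submodule.mem_colon_singleton, algebraMap_smul, hHz]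
  exact ⟨(H.hom (i + 1) (i + 2)).hom.lTensor M z, rfl⟩

-- The corestriction of `d : P (i + 1) → P i` to its range is a cocycle, hence factors through `d`.
theorem exact_tensorDifferential_of_hasProjectiveDimensionLT {N : ℕ}
    [HasProjectiveDimensionLT Z (N + 1)] (hi : N ≤ i) :
    Function.Exact (tensorDifferential P B M (i + 1)) (tensorDifferential P B M i) := by
  let d := (P.complex.d (i + 1) i).hom
  have hd : Function.Exact (P.complex.d (i + 2) (i + 1)).hom d :=
    (ShortComplex.ShortExact.moduleCat_exact_iff_function_exact _).mp (P.exact_succ i)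
  have hd' : Function.Exact (P.complex.d (i + 2) (i + 1)).hom d.rangeRestrict := fun x ↦
    Subtype.ext_iff.trans (hd x)
  obtain ⟨t, ht⟩ := (P.extMk_eq_zero_iff (Y := ModuleCat.of Q (LinearMap.range d))
    (ModuleCat.ofHom d.rangeRestrict) (i + 2) rfl
    (ModuleCat.hom_ext hd'.linearMap_comp_eq_zero) i rfl).mp
    ((HasProjectiveDimensionLT.subsingleton Z (N + 1) (i + 1) (by omega) _).elim _ _)
  refine LinearMap.exact_of_comp_eq_zero_of_ker_le_range
    (tensorDifferential_comp_tensorDifferential P B M i)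
    fun z hz ↦ (lTensor_exact M hd' d.surjective_rangeRestrict z).mp ?_
  rw [LinearMap.mem_ker, tensorDifferential_apply] at hz
  calc d.rangeRestrict.lTensor M z = (t.hom ∘ₗ d).lTensor M z :=
        congr((ModuleCat.Hom.hom $ht).lTensor M z).symm
    _ = 0 := by rw [LinearMap.lTensor_comp_apply, hz, map_zero]

theorem exact_tensorDifferential_of_isWeaklyRegular {M : Type w} [AddCommGroup M] [Module Q M]
    {N : ℕ} [HasProjectiveDimensionLT Z (N + 1)] {ss : List Q}
    (hss : ∀ s ∈ ss, ∀ y : Z, s • y = 0) (hM : IsWeaklyRegular M ss) (hi : N ≤ i + ss.length) :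
    Function.Exact (tensorDifferential P Q M (i + 1)) (tensorDifferential P Q M i) := by
  induction ss generalizing M i with
  | nil => exact exact_tensorDifferential_of_hasProjectiveDimensionLT P hi
  | cons s ss ih =>
    rw [isWeaklyRegular_cons_iff] at hM
    rw [List.forall_mem_cons] at hss
    rw [List.length_cons] at hi
    exact exact_tensorDifferential_of_isSMulRegular P hM.1 (Submodule.mkQ_surjective _)
      (LinearMap.exact_lsmul_mkQ_smul_top M s) (ih hss.2 hM.2 (by omega))
      fun z hz ↦ Ideal.le_radical (algebraMap_mem_colon_range_tensorDifferential P hss.1 hz)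

theorem mem_radical_colon_range_tensorDifferential_of_isLocalizedModule (u : B) (g : M →ₗ[B] M')
    [IsLocalizedModule (.powers u) g]
    (hM' : Function.Exact (tensorDifferential P B M' (i + 1)) (tensorDifferential P B M' i))
    {z : M ⊗[Q] P.complex.X (i + 1)} (hz : tensorDifferential P B M i z = 0) :
    u ∈ ((LinearMap.range (tensorDifferential P B M (i + 1))).colon {z}).radical := by
  let ρ (j : ℕ) := AlgebraTensorModule.rTensor Q (P.complex.X j) g
  have hρ (j x) : tensorDifferential P B M' j (ρ (j + 1) x) = ρ j (tensorDifferential P B M j x) :=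
    congr($(tensorDifferential_comp_rTensor P g j) x)
  obtain ⟨w', hw'⟩ := (hM' (ρ _ z)).mp (by rw [hρ, hz, map_zero])
  obtain ⟨⟨w, s⟩, hw⟩ := IsLocalizedModule.surj (.powers u) (ρ (i + 2)) w'
  obtain ⟨c, hc⟩ := (IsLocalizedModule.eq_iff_exists (.powers u) (ρ (i + 1))
    (x₁ := tensorDifferential P B M (i + 1) w) (x₂ := s • z)).mp <| by
      rw [← hρ, ← hw, Submonoid.smul_def, Submonoid.smul_def, map_smul, map_smul, hw']
  obtain ⟨n, hn⟩ := (c * s).2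
  refine ⟨n, Submodule.mem_colon_singleton.mpr ⟨c • w, ?_⟩⟩
  simp only [Submonoid.smul_def] at hc
  rw [Submonoid.smul_def, map_smul, hc, smul_smul, ← Submonoid.coe_mul, ← hn]

end TensorResolution

section RegularSequences

open RingTheory.Sequence
open scoped Pointwise

theorem isWeaklyRegular_self_cons_iff {R : Type*} [CommRing R] (r : R) (rs : List R) :
    IsWeaklyRegular R (r :: rs) ↔ IsSMulRegular R r ∧
      IsWeaklyRegular (R ⧸ Ideal.span {r}) (rs.map (Ideal.Quotient.mk (Ideal.span {r}))) := by
  have hspan : (r • ⊤ : Ideal R) = Ideal.span {r} := by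
    rw [← Submodule.ideal_span_singleton_smul, smul_eq_mul, Ideal.mul_top]
  rw [isWeaklyRegular_cons_iff]
  refine and_congr_right' (.trans ?_
    (isWeaklyRegular_map_algebraMap_iff (R ⧸ Ideal.span {r}) (R ⧸ Ideal.span {r}) rs).symm)
  exact (Submodule.quotEquivOfEq _ _ hspan).isWeaklyRegular_congr rs

theorem isWeaklyRegular_map_X {σ R : Type*} [CommRing R] {l : List σ} (hl : l.Nodup) :
    IsWeaklyRegular (MvPolynomial σ R) (l.map (X : σ → MvPolynomial σ R)) := by
  refine ⟨fun i hi ↦ ?_⟩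
  rw [List.length_map] at hi
  have hspan : Ideal.ofList ((l.map (X : σ → MvPolynomial σ R)).take i) =
      Ideal.span (X '' {j | j ∈ l.take i}) := by
    rw [Ideal.ofList, ← List.map_take]
    congr 1
    ext
    simp only [List.mem_map, Set.mem_ofPred_eq, Set.mem_image]
  have hnotMem : l[i] ∉ l.take i := fun h ↦ by
    obtain ⟨k, hk, hki⟩ := List.mem_take_iff_getElem.mp h
    have := hl.getElem_inj_iff.mp hki
    omega
  rw [isSMulRegular_iff_right_eq_zero_of_smul]
  intro p hp
  obtain ⟨p, rfl⟩ := Submodule.Quotient.mk_surjective _ p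
  rw [← Submodule.Quotient.mk_smul, Submodule.Quotient.mk_eq_zero] at hp
  rw [Submodule.Quotient.mk_eq_zero]
  simp only [smul_eq_mul, Ideal.mul_top, hspan, mem_ideal_span_X_image, List.getElem_map] at hp ⊢
  intro m hm
  obtain ⟨j, hj, hmj⟩ := hp (m + Finsupp.single l[i] 1)
    (by rw [mem_support_iff, add_comm, coeff_X_mul]; exact mem_support_iff.mp hm)
  refine ⟨j, hj, ?_⟩
  rwa [Finsupp.add_apply, Finsupp.single_eq_of_ne (ne_of_mem_of_not_mem hj hnotMem), add_zero]
    at hmj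

/-- The automorphism of a polynomial ring given by `Xᵣ ↦ u Xᵣ - aᵣ` for a unit `u`. -/
noncomputable def affineEquiv {σ R : Type*} [CommRing R] (u : Rˣ) (a : σ → R) :
    MvPolynomial σ R ≃ₐ[R] MvPolynomial σ R :=
  AlgEquiv.ofAlgHom (aeval fun r ↦ C u.1 * X r - C (a r))
    (aeval fun r ↦ C (u⁻¹).1 * (X r + C (a r)))
    (by
      ext r : 1
      simp only [AlgHom.comp_apply, aeval_X, map_mul, map_add, algHom_C, algebraMap_eq,
        sub_add_cancel, AlgHom.id_apply]
      rw [← mul_assoc, ← C_mul, Units.inv_mul, C_1, one_mul])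
    (by
      ext r : 1
      simp only [AlgHom.comp_apply, aeval_X, map_mul, map_sub, algHom_C, algebraMap_eq,
        AlgHom.id_apply]
      rw [← mul_assoc, ← C_mul, Units.mul_inv, C_1, one_mul, add_sub_cancel_right])

theorem isWeaklyRegular_map_mul_X_sub {σ R : Type*} [CommRing R] {l : List σ}
    (hl : l.Nodup) (u : Rˣ) (a : σ → R) :
    IsWeaklyRegular (MvPolynomial σ R) (l.map fun r ↦ C u.1 * X r - C (a r)) := by
  refine (AddEquiv.isWeaklyRegular_congr (e := (affineEquiv u a).toAddEquiv) ?_).mp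
    (isWeaklyRegular_map_X hl)
  rw [List.forall₂_map_left_iff, List.forall₂_map_right_iff, List.forall₂_same]
  intro r _ p
  change affineEquiv u a (X r * p) = _ * affineEquiv u a p
  rw [map_mul, affineEquiv, AlgEquiv.ofAlgHom_apply, aeval_X]

theorem hasProjectiveDimensionLT_quotient_of_isWeaklyRegular {R : Type u} [CommRing R]
    {M : Type u} [AddCommGroup M] [Module R M] {rs : List R} (h : IsWeaklyRegular M rs) (n : ℕ)
    [HasProjectiveDimensionLT (ModuleCat.of R M) n] :
    HasProjectiveDimensionLT
      (ModuleCat.of R (M ⧸ (Ideal.ofList rs • ⊤ : Submodule R M))) (n + rs.length) := by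
  induction rs generalizing M n with
  | nil =>
    exact hasProjectiveDimensionLT_of_iso
      (Submodule.quotEquivOfEqBot _ (by simp)).symm.toModuleIso n
  | cons r rs ih =>
    obtain ⟨hr, h⟩ := (isWeaklyRegular_cons_iff M r rs).mp h
    have hM := hasProjectiveDimensionLT_of_ge (ModuleCat.of R M) n (n + 1) n.le_succ
    have : HasProjectiveDimensionLT (ModuleCat.of R (QuotSMulTop r M)) (n + 1) :=
      (IsSMulRegular.smulShortComplex_shortExact (M := ModuleCat.of R M)
        hr).hasProjectiveDimensionLT_X₃ n ‹_› hM
    rw [List.length_cons, ← Nat.succ_add_eq_add_succ]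
    have := ih h (n + 1)
    exact hasProjectiveDimensionLT_of_iso
      (Submodule.quotOfListConsSMulTopEquivQuotSMulTopInner M r rs).symm.toModuleIso _

theorem hasProjectiveDimensionLT_quotient_span_X (σ R : Type u) [Fintype σ] [CommRing R] :
    HasProjectiveDimensionLT (ModuleCat.of (MvPolynomial σ R)
      (MvPolynomial σ R ⧸ Ideal.span (Set.range (X : σ → MvPolynomial σ R))))
      (Fintype.card σ + 1) := by
  have : Projective (ModuleCat.of (MvPolynomial σ R) (MvPolynomial σ R)) :=
    (IsProjective.iff_projective _).mp inferInstance
  have h := hasProjectiveDimensionLT_quotient_of_isWeaklyRegular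
    (isWeaklyRegular_map_X (R := R) (Finset.univ : Finset σ).nodup_toList) 1
  rw [List.length_map, Finset.length_toList, Finset.card_univ, add_comm] at h
  have hspan : Ideal.ofList (Finset.univ.toList.map (X : σ → MvPolynomial σ R)) • ⊤ =
      Ideal.span (Set.range (X : σ → MvPolynomial σ R)) := by
    rw [smul_eq_mul, Ideal.mul_top, Ideal.ofList]
    congr 1
    ext
    simp
  exact hasProjectiveDimensionLT_of_iso (Submodule.quotEquivOfEq _ _ hspan).toModuleIso _

theorem exact_lsmul_C_map_quotientMk (σ : Type*) {R : Type*} [CommRing R] (r : R) :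
    Function.Exact (LinearMap.lsmul (MvPolynomial σ R) (MvPolynomial σ R) (C r))
      (MvPolynomial.map (σ := σ) (Ideal.Quotient.mk (Ideal.span {r}))) := fun p ↦ by
  rw [← C_dvd_iff_map_hom_eq_zero _ r fun x ↦ Ideal.Quotient.eq_zero_iff_dvd r x]
  exact ⟨fun ⟨q, hq⟩ ↦ ⟨q, hq.symm⟩, fun ⟨q, hq⟩ ↦ ⟨q, hq.symm⟩⟩

end RegularSequences

section ChartRelations

open TensorProduct RingTheory.Sequence

variable {σ Q A : Type u} [Fintype σ] [CommRing Q] [CommRing A] [Algebra Q (MvPolynomial σ A)]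
  {Z : ModuleCat.{u} Q} [HasProjectiveDimensionLT Z (Fintype.card σ + 1)]
  (P : ProjectiveResolution Z) {s : σ → Q} (hsZ : ∀ r, ∀ y : Z, s r • y = 0) {i : ℕ}
  {u : A} {a : σ → A}

include hsZ

theorem exact_tensorDifferential_mvPolynomial_of_isUnit (hu : IsUnit u)
    (hs : ∀ r, algebraMap Q (MvPolynomial σ A) (s r) = C u * X r - C (a r)) :
    Function.Exact (tensorDifferential P (MvPolynomial σ A) (MvPolynomial σ A) (i + 1))
      (tensorDifferential P (MvPolynomial σ A) (MvPolynomial σ A) i) := by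
  have hreg := isWeaklyRegular_map_mul_X_sub (Finset.univ : Finset σ).nodup_toList hu.unit a
  simp only [hu.unit_spec, ← hs] at hreg
  rw [← Function.comp_def, ← List.map_map, isWeaklyRegular_map_algebraMap_iff] at hreg
  exact exact_tensorDifferential_of_isWeaklyRegular P (N := Fintype.card σ)
    (List.forall_mem_map.mpr fun r _ ↦ hsZ r) hreg (by simp)

variable (hs : ∀ r, algebraMap Q (MvPolynomial σ A) (s r) = C u * X r - C (a r))

include hs

theorem C_mem_radical_colon_range_tensorDifferential {z : MvPolynomial σ A ⊗[Q] P.complex.X (i + 1)}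
    (hz : tensorDifferential P (MvPolynomial σ A) (MvPolynomial σ A) i z = 0) :
    C u ∈ ((LinearMap.range (tensorDifferential P (MvPolynomial σ A) (MvPolynomial σ A)
      (i + 1))).colon {z}).radical := by
  let : Algebra (MvPolynomial σ A) (MvPolynomial σ (Localization.Away u)) := algebraMvPolynomial
  let : Algebra Q (MvPolynomial σ (Localization.Away u)) :=
    ((algebraMap (MvPolynomial σ A) _).comp (algebraMap Q _)).toAlgebra
  have : IsScalarTower Q (MvPolynomial σ A) (MvPolynomial σ (Localization.Away u)) :=
    .of_algebraMap_eq' rfl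
  have : IsLocalization (.powers (C u : MvPolynomial σ A))
      (MvPolynomial σ (Localization.Away u)) := by
    have := MvPolynomial.isLocalization (σ := σ) (.powers u) (Localization.Away u)
    rwa [Submonoid.map_powers] at this
  refine mem_radical_colon_range_tensorDifferential_of_isLocalizedModule P (C u)
    (Algebra.linearMap (MvPolynomial σ A) (MvPolynomial σ (Localization.Away u))) ?_ hz
  refine exact_tensorDifferential_mvPolynomial_of_isUnit P hsZ
    (IsLocalization.Away.algebraMap_isUnit u)
    (a := fun r ↦ algebraMap A (Localization.Away u) (a r)) fun r ↦ ?_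
  rw [IsScalarTower.algebraMap_apply Q (MvPolynomial σ A), hs]
  change MvPolynomial.map _ _ = _
  simp only [map_sub, map_mul, map_C, map_X]

theorem C_mem_radical_colon_range_tensorDifferential_of_mem_span {r : A}
    (hr : r ∈ Ideal.span (insert u (Set.range a)))
    {z : MvPolynomial σ A ⊗[Q] P.complex.X (i + 1)}
    (hz : tensorDifferential P (MvPolynomial σ A) (MvPolynomial σ A) i z = 0) :
    C r ∈ ((LinearMap.range (tensorDifferential P (MvPolynomial σ A) (MvPolynomial σ A)
      (i + 1))).colon {z}).radical := by
  set I := ((LinearMap.range (tensorDifferential P (MvPolynomial σ A) (MvPolynomial σ A)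
    (i + 1))).colon {z}).radical
  have hu : C u ∈ I := C_mem_radical_colon_range_tensorDifferential P hsZ hs hz
  have ha (j : σ) : C (a j) ∈ I := by
    have hsj : algebraMap Q (MvPolynomial σ A) (s j) ∈ I :=
      Ideal.le_radical (algebraMap_mem_colon_range_tensorDifferential P (hsZ j) hz)
    rw [← sub_sub_cancel (C u * X j) (C (a j)), ← hs]
    exact I.sub_mem (I.mul_mem_right _ hu) hsj
  have hI : Ideal.span (insert u (Set.range a)) ≤ I.comap C := by
    rw [Ideal.span_le, Set.insert_subset_iff, Set.range_subset_iff]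
    exact ⟨hu, ha⟩
  exact hI hr

theorem exact_tensorDifferential_mvPolynomial {rs : List A} (hrs : IsWeaklyRegular A rs)
    (hmem : ∀ r ∈ rs, r ∈ Ideal.span (insert u (Set.range a)))
    (hi : Fintype.card σ ≤ i + rs.length) :
    Function.Exact (tensorDifferential P (MvPolynomial σ A) (MvPolynomial σ A) (i + 1))
      (tensorDifferential P (MvPolynomial σ A) (MvPolynomial σ A) i) := by
  induction hn : rs.length generalizing A i rs with
  | zero =>
    exact exact_tensorDifferential_of_hasProjectiveDimensionLT P (N := Fintype.card σ) (by omega)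
  | succ n ih =>
    obtain ⟨r, rs, rfl⟩ := List.exists_of_length_succ rs hn
    obtain ⟨hr, hrs⟩ := (isWeaklyRegular_self_cons_iff r rs).mp hrs
    rw [List.forall_mem_cons] at hmem
    rw [List.length_cons] at hi hn
    let mk := Ideal.Quotient.mk (Ideal.span {r})
    let : Algebra (MvPolynomial σ A) (MvPolynomial σ (A ⧸ Ideal.span {r})) :=
      (MvPolynomial.map mk).toAlgebra
    let : Algebra Q (MvPolynomial σ (A ⧸ Ideal.span {r})) :=
      ((MvPolynomial.map mk).comp (algebraMap Q (MvPolynomial σ A))).toAlgebra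
    have : IsScalarTower Q (MvPolynomial σ A) (MvPolynomial σ (A ⧸ Ideal.span {r})) :=
      .of_algebraMap_eq' rfl
    have hs_mk (j : σ) : algebraMap Q (MvPolynomial σ (A ⧸ Ideal.span {r})) (s j) =
        C (mk u) * X j - C ((mk ∘ a) j) := by
      rw [IsScalarTower.algebraMap_apply Q (MvPolynomial σ A), hs]
      change MvPolynomial.map mk _ = _
      simp only [map_sub, map_mul, map_C, map_X, Function.comp_apply]
    have hmem_mk : ∀ x ∈ rs.map mk, x ∈ Ideal.span (insert (mk u) (Set.range (mk ∘ a))) :=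
      List.forall_mem_map.mpr fun x hx ↦ by
        rw [Set.range_comp, ← Set.image_insert_eq, ← Ideal.map_span]
        exact Ideal.mem_map_of_mem mk (hmem.2 x hx)
    exact exact_tensorDifferential_of_isSMulRegular P hr.of_flat
      (π := Algebra.linearMap _ (MvPolynomial σ (A ⧸ Ideal.span {r})))
      (map_surjective mk Ideal.Quotient.mk_surjective) (exact_lsmul_C_map_quotientMk σ r)
      (ih hs_mk hrs hmem_mk (by rw [List.length_map]; omega) (by rw [List.length_map]; omega))
      fun z hz ↦ C_mem_radical_colon_range_tensorDifferential_of_mem_span P hsZ hs hmem.1 hz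

end ChartRelations

theorem tor_eq_zero_blowup_chart_relations_general {σ Λ R : Type u} [Fintype σ] [CommRing Λ]
    [CommRing R] [Algebra (MvPolynomial σ Λ) (MvPolynomial σ R)] {u : R} {a : σ → R}
    (hX : ∀ r, algebraMap (MvPolynomial σ Λ) (MvPolynomial σ R) (X r) = C u * X r - C (a r))
    {rs : List R} (hrs : RingTheory.Sequence.IsWeaklyRegular R rs)
    (hmem : ∀ r ∈ rs, r ∈ Ideal.span (insert u (Set.range a))) {i : ℕ} (hi : 0 < i)
    (hcard : Fintype.card σ < i + rs.length) :
    IsZero (((Tor (ModuleCat (MvPolynomial σ Λ)) i).obj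
        (ModuleCat.of (MvPolynomial σ Λ) (MvPolynomial σ R))).obj
      (ModuleCat.of (MvPolynomial σ Λ)
        (MvPolynomial σ Λ ⧸ Ideal.span (Set.range (X : σ → MvPolynomial σ Λ))))) := by
  obtain ⟨i, rfl⟩ := Nat.exists_eq_succ_of_ne_zero hi.ne'
  have := hasProjectiveDimensionLT_quotient_span_X σ Λ
  have hX_smul (r : σ) (y : MvPolynomial σ Λ ⧸ Ideal.span (Set.range (X : σ → MvPolynomial σ Λ))) :
      (X r : MvPolynomial σ Λ) • y = 0 := by
    obtain ⟨p, rfl⟩ := Ideal.Quotient.mk_surjective y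
    exact Ideal.Quotient.eq_zero_iff_mem.mpr
      (Ideal.mul_mem_right _ _ (Ideal.subset_span ⟨r, rfl⟩))
  exact (isZero_tor_succ_iff_exact (projectiveResolution _) (MvPolynomial σ R) _ i).mpr
    (exact_tensorDifferential_mvPolynomial _ hX_smul hX hrs hmem (by omega))

/-- Let `f₁, …, fₙ` be a regular sequence in a commutative ring `R` and fix `k`.
Let `B = R[Xᵣ : r ≠ k]` and regard `B` as an algebra over `Q = ℤ[Sᵣ : r ≠ k]` via
`Sᵣ ↦ f_k·Xᵣ − fᵣ`.  Then `Torᵢ^Q (B, Q/(Sᵣ : r ≠ k)) = 0` for every `i > 0`; that is,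
the sequence `(f_k·Xᵣ − fᵣ)_{r ≠ k}` (the defining relations of the `k`-th chart of the
blow-up of `Spec R` in `V(f₁,…,fₙ)`) is Koszul-regular in `B`. -/
theorem tor_eq_zero_blowup_chart_relations (R : Type) [CommRing R] (n : ℕ)
    (f : Fin n → R) (hf : RingTheory.Sequence.IsRegular R (List.ofFn f)) (k : Fin n)
    (i : ℕ) (hi : 0 < i) :
    letI : Algebra (MvPolynomial {r : Fin n // r ≠ k} ℤ)
        (MvPolynomial {r : Fin n // r ≠ k} R) :=
      (MvPolynomial.aeval fun r : {r : Fin n // r ≠ k} =>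
        (C (f k) * X r - C (f r.1) : MvPolynomial {r : Fin n // r ≠ k} R)).toRingHom.toAlgebra
    IsZero (((Tor (ModuleCat (MvPolynomial {r : Fin n // r ≠ k} ℤ)) i).obj
        (ModuleCat.of (MvPolynomial {r : Fin n // r ≠ k} ℤ)
          (MvPolynomial {r : Fin n // r ≠ k} R))).obj
      (ModuleCat.of (MvPolynomial {r : Fin n // r ≠ k} ℤ)
        (MvPolynomial {r : Fin n // r ≠ k} ℤ ⧸
          Ideal.span (Set.range
            (X : {r : Fin n // r ≠ k} → MvPolynomial {r : Fin n // r ≠ k} ℤ))))) := by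
  let : Algebra (MvPolynomial {r : Fin n // r ≠ k} ℤ) (MvPolynomial {r : Fin n // r ≠ k} R) :=
    (MvPolynomial.aeval fun r : {r : Fin n // r ≠ k} =>
      (C (f k) * X r - C (f r.1) : MvPolynomial {r : Fin n // r ≠ k} R)).toRingHom.toAlgebra
  refine tor_eq_zero_blowup_chart_relations_general (a := fun r ↦ f r.1) (fun r ↦ aeval_X _ r)
    hf.toIsWeaklyRegular (List.forall_mem_ofFn_iff.mpr fun l ↦ Ideal.subset_span ?_) hi
    (by simp; omega)
  obtain rfl | hl := eq_or_ne l k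
  · exact Set.mem_insert _ _
  · exact Set.mem_insert_of_mem _ ⟨⟨l, hl⟩, rfl⟩
end

section
/- Let R be a commutative ring, n ≥ 1, and fix k with 1 ≤ k ≤ n. Let φ be the R[T₁,…,Tₙ]-algebra homomorphism from the polynomial ring R[T₁,…,Tₙ][X_r : r ≠ k] to the localization R[T₁,…,Tₙ][T_k^{-1}] of R[T₁,…,Tₙ] away from T_k, determined by X_r ↦ T_r·T_k^{-1}. Then the kernel of φ is exactly the ideal generated by the elements T_k·X_r − T_r for r ≠ k. (This identifies R[T₁,…,Tₙ][X_r : r ≠ k]/(T_kX_r − T_r) with the chart A_k = R[T₁/T_k,…,Tₙ/T_k,T_k] of the blow-up of affine n-space at the origin.) -/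
open MvPolynomial

/-!
Let `t` be an element and `a` a family of elements of a ring `A`. If a ring homomorphism `φ` on
`A[X]` has kernel `I = (t X_r - a_r)` and `φ t` is regular, then `I` is also the kernel of the
evaluation `X_r ↦ a_r / t` in `A[t⁻¹]`: after inverting `φ t`, which loses nothing, the relations
force `φ X_r = φ a_r / φ t`, so that `φ` factors through that evaluation.

For `A = R[T]`, `t = T_k` and `a_r = T_r`, the substitution `T_k ↦ T_k`, `T_r ↦ T_k T_r`,
`X_r ↦ T_r` into `R[T]` is such a `φ`. It kills the relations, and modulo them it is inverted by
`T_k ↦ T_k`, `T_r ↦ X_r`.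
-/

section Fractions

variable {ι A : Type*} [CommRing A] (t : A) (a : ι → A)

/-- The ideal of `A[X]` generated by the relations `t * X i = a i`, which present the fractions
`a i / t`. -/
noncomputable def fractionRelations : Ideal (MvPolynomial ι A) :=
  Ideal.span (Set.range fun i => C t * X i - C (a i))

variable {t a}

lemma fractionRelations_le_iff {J : Ideal (MvPolynomial ι A)} :
    fractionRelations t a ≤ J ↔ ∀ i, C t * X i - C (a i) ∈ J := by
  rw [fractionRelations, Ideal.span_le, Set.range_subset_iff]
  rfl

variable (t a) in
lemma mk_C_mul_mk_X_fractionRelations (i : ι) :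
    Ideal.Quotient.mk (fractionRelations t a) (C t) * Ideal.Quotient.mk _ (X i) =
      Ideal.Quotient.mk _ (C (a i)) :=
  Ideal.Quotient.eq.mpr (fractionRelations_le_iff.mp le_rfl i)

variable {S : Type*} [CommRing S] [Algebra A S] [IsLocalization.Away t S]

variable (t a S) in
/-- Evaluation of a polynomial over `A` at the fractions `a i / t` of a localization `S` of `A` away
from `t`. -/
noncomputable def evalFractions : MvPolynomial ι A →ₐ[A] S :=
  aeval fun i => algebraMap A S (a i) * IsLocalization.Away.invSelf t

lemma algebraMap_mul_evalFractions_X (i : ι) :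
    algebraMap A S t * evalFractions t a S (X i) = algebraMap A S (a i) := by
  rw [evalFractions, aeval_X, mul_left_comm, IsLocalization.Away.mul_invSelf, mul_one]

lemma fractionRelations_le_ker_evalFractions :
    fractionRelations t a ≤ RingHom.ker (evalFractions t a S) := by
  refine fractionRelations_le_iff.mpr fun i => ?_
  rw [RingHom.mem_ker, map_sub, map_mul, algHom_C, algHom_C, algebraMap_mul_evalFractions_X,
    sub_self]

lemma lift_comp_evalFractions {B : Type*} [CommRing B] {φ : MvPolynomial ι A →+* B}
    (isUnit_t : IsUnit (φ.comp C t)) (relations : fractionRelations t a ≤ RingHom.ker φ) :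
    (IsLocalization.Away.lift t isUnit_t).comp (evalFractions t a S : MvPolynomial ι A →+* S) =
      φ := by
  let ψ : S →+* B := IsLocalization.Away.lift t isUnit_t
  have ψ_algebraMap (c : A) : ψ (algebraMap A S c) = φ (C c) :=
    IsLocalization.Away.lift_eq t isUnit_t c
  have relation (i : ι) : φ (C t * X i) = φ (C (a i)) :=
    (RingHom.sub_mem_ker_iff φ).mp (fractionRelations_le_iff.mp relations i)
  refine ringHom_ext (fun c => ?_) fun i => isUnit_t.mul_left_cancel ?_
  · rw [RingHom.comp_apply, RingHom.coe_coe, algHom_C, ψ_algebraMap]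
  · calc φ (C t) * ψ (evalFractions t a S (X i))
        = φ (C (a i)) := by
          rw [← ψ_algebraMap, ← map_mul, algebraMap_mul_evalFractions_X, ψ_algebraMap]
      _ = φ (C t) * φ (X i) := by rw [← relation, map_mul]

lemma ker_evalFractions_le_ker {B F : Type*} [CommRing B] [FunLike F (MvPolynomial ι A) B]
    [RingHomClass F (MvPolynomial ι A) B] {φ : F} (regular : IsRegular (φ (C t)))
    (relations : fractionRelations t a ≤ RingHom.ker φ) :
    RingHom.ker (evalFractions t a S) ≤ RingHom.ker φ := by
  intro f hf
  let L := Localization.Away (φ (C t))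
  let φL : MvPolynomial ι A →+* L := (algebraMap B L).comp φ
  have isUnit_t : IsUnit (φL.comp C t) := IsLocalization.Away.algebraMap_isUnit (φ (C t))
  have relationsL : fractionRelations t a ≤ RingHom.ker φL :=
    relations.trans fun p hp => by
      rw [RingHom.mem_ker, RingHom.comp_apply, RingHom.coe_coe, RingHom.mem_ker.mp hp, map_zero]
  have injective_algebraMap : Function.Injective (algebraMap B L) :=
    IsLocalization.injective L (Submonoid.powers_le.mpr regular.mem_nonZeroDivisors)
  refine (injective_iff_map_eq_zero _).mp injective_algebraMap _ ?_
  calc φL f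
      = IsLocalization.Away.lift t isUnit_t (evalFractions t a S f) :=
        (RingHom.congr_fun (lift_comp_evalFractions isUnit_t relationsL) f).symm
    _ = 0 := by rw [RingHom.mem_ker.mp hf, map_zero]

lemma ker_evalFractions_eq_fractionRelations {B F : Type*} [CommRing B]
    [FunLike F (MvPolynomial ι A) B] [RingHomClass F (MvPolynomial ι A) B] {φ : F}
    (regular : IsRegular (φ (C t))) (ker_eq : RingHom.ker φ = fractionRelations t a) :
    RingHom.ker (evalFractions t a S) = fractionRelations t a :=
  ((ker_evalFractions_le_ker regular ker_eq.ge).trans_eq ker_eq).antisymm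
    fractionRelations_le_ker_evalFractions

end Fractions

section BlowupChart

variable {σ R : Type*} [CommRing R] (k : σ)

variable (R) in
/-- The relations `T_k * X_r = T_r` for `r ≠ k` between the coefficients and the variables of
`R[T][X]`. -/
noncomputable abbrev chartRelations : Ideal (MvPolynomial {r : σ // r ≠ k} (MvPolynomial σ R)) :=
  fractionRelations (X k) fun r => X r.1

open Classical in
/-- The substitution `T_k ↦ T_k`, `T_r ↦ T_k * T_r` for `r ≠ k`, which is the blow-down map in the
coordinates of the chart. -/
noncomputable def chartSubst : MvPolynomial σ R →ₐ[R] MvPolynomial σ R :=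
  aeval fun r => if r = k then X k else X k * X r

lemma chartSubst_X_self : chartSubst k (X k : MvPolynomial σ R) = X k := by
  simp [chartSubst]

lemma chartSubst_X_of_ne {r : σ} (hr : r ≠ k) :
    chartSubst k (X r : MvPolynomial σ R) = X k * X r := by
  simp [chartSubst, hr]

/-- The extension of `chartSubst k` by `X_r ↦ T_r`, which identifies the quotient by
`chartRelations R k` with a polynomial ring: `T_k` and the `X_r` are coordinates on the chart. -/
noncomputable def chartParam :
    MvPolynomial {r : σ // r ≠ k} (MvPolynomial σ R) →ₐ[R] MvPolynomial σ R :=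
  aevalTower (chartSubst k) fun r => X r.1

open Classical in
/-- The map `T_k ↦ T_k`, `T_r ↦ X_r` for `r ≠ k`, a section of `chartParam k`. -/
noncomputable def chartSection :
    MvPolynomial σ R →ₐ[R] MvPolynomial {r : σ // r ≠ k} (MvPolynomial σ R) :=
  aeval fun r => if h : r = k then C (X k) else X ⟨r, h⟩

lemma chartSection_X_self : chartSection k (X k : MvPolynomial σ R) = C (X k) := by
  simp [chartSection]

lemma chartSection_X_of_ne {r : σ} (hr : r ≠ k) :
    chartSection k (X r : MvPolynomial σ R) = X ⟨r, hr⟩ := by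
  simp [chartSection, hr]

lemma mkₐ_comp_chartSection_comp_chartParam :
    ((Ideal.Quotient.mkₐ R (chartRelations R k)).comp (chartSection k)).comp (chartParam k) =
      Ideal.Quotient.mkₐ R (chartRelations R k) := by
  refine AlgHom.coe_ringHom_injective
    (ringHom_ext' (ringHom_ext (fun a => ?_) fun r => ?_) fun r => ?_)
  · simp [chartParam, algebraMap_eq]
  · by_cases hr : r = k
    · subst hr
      simp [chartParam, chartSubst_X_self, chartSection_X_self]
    · simpa [chartParam, chartSubst_X_of_ne k hr, chartSection_X_self, chartSection_X_of_ne k hr]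
        using mk_C_mul_mk_X_fractionRelations (X k) (fun r : {r : σ // r ≠ k} => X r.1) ⟨r, hr⟩
  · simp [chartParam, chartSection_X_of_ne k r.2]

lemma ker_chartParam : RingHom.ker (chartParam k) = chartRelations R k := by
  refine le_antisymm (fun f hf => ?_) (fractionRelations_le_iff.mpr fun r => ?_)
  · rw [← Ideal.Quotient.eq_zero_iff_mem, ← Ideal.Quotient.mkₐ_eq_mk R,
      ← mkₐ_comp_chartSection_comp_chartParam, AlgHom.comp_apply, RingHom.mem_ker.mp hf, map_zero]
  · simp [RingHom.mem_ker, chartParam, chartSubst_X_self, chartSubst_X_of_ne k r.2]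

lemma isRegular_chartParam_C_X_self : IsRegular (chartParam (R := R) k (C (X k))) := by
  rw [chartParam, aevalTower_C, chartSubst_X_self]
  exact isRegular_X

end BlowupChart

theorem ker_blowup_chart_eval_general {σ R S : Type*} [CommRing R] (k : σ) [CommRing S]
    [Algebra (MvPolynomial σ R) S] [IsLocalization.Away (X k : MvPolynomial σ R) S] :
    RingHom.ker (aeval (R := MvPolynomial σ R) fun r : {r : σ // r ≠ k} =>
        algebraMap (MvPolynomial σ R) S (X r.1) *
          IsLocalization.Away.invSelf (X k : MvPolynomial σ R)) =
      Ideal.span (Set.range fun r : {r : σ // r ≠ k} =>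
        (C (X k) * X r - C (X r.1) : MvPolynomial {r : σ // r ≠ k} (MvPolynomial σ R))) :=
  ker_evalFractions_eq_fractionRelations (isRegular_chartParam_C_X_self k) (ker_chartParam k)

/-- Let `P = R[T₁,…,Tₙ]` and let `φ` be the `P`-algebra homomorphism
`P[Xᵣ : r ≠ k] → P[T_k⁻¹]` determined by `Xᵣ ↦ Tᵣ · T_k⁻¹`.  Then the kernel of `φ` is
exactly the ideal generated by the elements `T_k·Xᵣ − Tᵣ` for `r ≠ k`.  This identifies
`P[Xᵣ : r ≠ k]/(T_k Xᵣ − Tᵣ)` with the chart `R[T₁/T_k, …, Tₙ/T_k, T_k]` of the blow-up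
of affine `n`-space at the origin. -/
theorem ker_blowup_chart_eval (R : Type*) [CommRing R] (n : ℕ) (k : Fin n) :
    RingHom.ker (MvPolynomial.aeval (R := MvPolynomial (Fin n) R)
        (fun r : {r : Fin n // r ≠ k} =>
          algebraMap (MvPolynomial (Fin n) R)
              (Localization.Away (X k : MvPolynomial (Fin n) R)) (X r.1) *
            IsLocalization.Away.invSelf
              (S := Localization.Away (X k : MvPolynomial (Fin n) R))
              (X k : MvPolynomial (Fin n) R))).toRingHom =
      Ideal.span (Set.range fun r : {r : Fin n // r ≠ k} =>
        (C (X k) * X r - C (X r.1) :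
          MvPolynomial {r : Fin n // r ≠ k} (MvPolynomial (Fin n) R))) :=
  ker_blowup_chart_eval_general k
end
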